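/- Let α ∈ ℝ, v > 0, and μ_{G1}, μ_{P1}, μ_{P2} ∈ ℝ. Define the mixture densities ρ₁(λ) = α·N(λ; μ_{G1}, v) + (1−α)·N(λ; μ_{P1}, v) and ρ₂(λ) = α·N(λ; μ_{G1}, v) + (1−α)·N(λ; μ_{P2}, v). Then ∫ (ρ₁(λ) − ρ₂(λ))² dλ = 2(1−α)²·(A − N(μ_{P1}; μ_{P2}, 2v)), where A = 1/√(4πv). -/

import Mathlib

open MeasureTheory Real

/-- The Gaussian probability density on `ℝ` with mean `μ` and variance `v`:
`N(x; μ, v) = (2πv)^{-1/2} exp(-(x-μ)²/(2v))`. -/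
noncomputable def gaussPdf (μ v x : ℝ) : ℝ :=
    (Real.sqrt (2 * Real.pi * v))⁻¹ * Real.exp (-(x - μ) ^ 2 / (2 * v))

/-!
The common component cancels in `ρ₁ - ρ₂`, leaving `(1 - α)²` times the squared `L²` distance of two
Gaussian densities. Completing the square shows that a product of two Gaussian densities in the same
variable is a constant multiple of a third one, so each inner product in the expanded square is that
constant, which is itself the value of a Gaussian density.
-/

section GaussianDensity

variable (a b : ℝ) {v w : ℝ}

lemma gaussPdf_coe_eq_gaussianPDFReal (v : NNReal) :
    gaussPdf a v = ProbabilityTheory.gaussianPDFReal a v := rfl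

lemma gaussPdf_self (v : ℝ) : gaussPdf a v a = 1 / √(2 * π * v) := by
  simp [gaussPdf]

lemma integrable_gaussPdf (hv : 0 ≤ v) : Integrable (gaussPdf a v) := by
  lift v to NNReal using hv
  rw [gaussPdf_coe_eq_gaussianPDFReal]
  exact ProbabilityTheory.integrable_gaussianPDFReal a v

lemma integral_gaussPdf_eq_one (hv : 0 < v) : ∫ x, gaussPdf a v x = 1 := by
  lift v to NNReal using hv.le
  rw [gaussPdf_coe_eq_gaussianPDFReal]
  exact ProbabilityTheory.integral_gaussianPDFReal_eq_one a (NNReal.coe_pos.mp hv).ne'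

lemma gaussPdf_mul_gaussPdf (hv : 0 < v) (hw : 0 < w) (x : ℝ) :
    gaussPdf a v x * gaussPdf b w x =
      gaussPdf b (v + w) a * gaussPdf ((w * a + v * b) / (v + w)) (v * w / (v + w)) x := by
  have normalization : √(2 * π * v) * √(2 * π * w) =
      √(2 * π * (v + w)) * √(2 * π * (v * w / (v + w))) := by
    rw [← sqrt_mul (by positivity), ← sqrt_mul (by positivity)]
    congr 1
    field_simp
  have complete_square : -(x - a) ^ 2 / (2 * v) + -(x - b) ^ 2 / (2 * w) =
      -(a - b) ^ 2 / (2 * (v + w)) +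
        -(x - (w * a + v * b) / (v + w)) ^ 2 / (2 * (v * w / (v + w))) := by
    field_simp
    ring
  simp only [gaussPdf]
  rw [mul_mul_mul_comm, ← mul_inv, ← exp_add, normalization, complete_square, mul_inv, exp_add,
    mul_mul_mul_comm]

lemma integrable_gaussPdf_mul_gaussPdf (hv : 0 < v) (hw : 0 < w) :
    Integrable (fun x ↦ gaussPdf a v x * gaussPdf b w x) := by
  simp only [gaussPdf_mul_gaussPdf a b hv hw]
  exact (integrable_gaussPdf _ (by positivity)).const_mul _

lemma integral_gaussPdf_mul_gaussPdf (hv : 0 < v) (hw : 0 < w) :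
    ∫ x, gaussPdf a v x * gaussPdf b w x = gaussPdf b (v + w) a := by
  simp only [gaussPdf_mul_gaussPdf a b hv hw]
  rw [integral_const_mul, integral_gaussPdf_eq_one _ (by positivity), mul_one]

lemma integral_gaussPdf_sub_gaussPdf_sq (hv : 0 < v) (hw : 0 < w) :
    ∫ x, (gaussPdf a v x - gaussPdf b w x) ^ 2 =
      gaussPdf a (v + v) a + gaussPdf b (w + w) b - 2 * gaussPdf b (v + w) a := by
  have haa := integrable_gaussPdf_mul_gaussPdf a a hv hv
  have hbb := integrable_gaussPdf_mul_gaussPdf b b hw hw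
  have hab := integrable_gaussPdf_mul_gaussPdf a b hv hw
  calc ∫ x, (gaussPdf a v x - gaussPdf b w x) ^ 2
      = ∫ x, (gaussPdf a v x * gaussPdf a v x + gaussPdf b w x * gaussPdf b w x
          - 2 * (gaussPdf a v x * gaussPdf b w x)) := by
        congr with x
        ring
    _ = (∫ x, gaussPdf a v x * gaussPdf a v x) + (∫ x, gaussPdf b w x * gaussPdf b w x)
          - 2 * ∫ x, gaussPdf a v x * gaussPdf b w x := by
        rw [integral_sub (haa.fun_add hbb) (hab.const_mul 2), integral_add haa hbb,
          integral_const_mul]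
    _ = gaussPdf a (v + v) a + gaussPdf b (w + w) b - 2 * gaussPdf b (v + w) a := by
        rw [integral_gaussPdf_mul_gaussPdf a a hv hv, integral_gaussPdf_mul_gaussPdf b b hw hw,
          integral_gaussPdf_mul_gaussPdf a b hv hw]

end GaussianDensity

lemma integral_mixture_sub_mixture_sq {Ω : Type*} [MeasurableSpace Ω] (μ : Measure Ω)
    (α β : ℝ) (f g h : Ω → ℝ) :
    ∫ x, ((α * f x + β * g x) - (α * f x + β * h x)) ^ 2 ∂μ =
      β ^ 2 * ∫ x, (g x - h x) ^ 2 ∂μ := by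
  simp only [add_sub_add_left_eq_sub, ← mul_sub, mul_pow, integral_const_mul]

/-- Equation 9 of the paper: with `ρ₁ = α·N(·; μG1, v) + (1-α)·N(·; μP1, v)` and
`ρ₂ = α·N(·; μG1, v) + (1-α)·N(·; μP2, v)`, one has
`∫ (ρ₁ - ρ₂)² = 2(1-α)²(A - N(μP1; μP2, 2v))` where `A = 1/√(4πv)`. -/
theorem mixture_L2_dist_rho1_rho2 (α v μG1 μP1 μP2 : ℝ) (hv : 0 < v) :
    ∫ lam : ℝ,
        ((α * gaussPdf μG1 v lam + (1 - α) * gaussPdf μP1 v lam) -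
          (α * gaussPdf μG1 v lam + (1 - α) * gaussPdf μP2 v lam)) ^ 2 =
      2 * (1 - α) ^ 2 *
        (1 / Real.sqrt (4 * Real.pi * v) - gaussPdf μP2 (2 * v) μP1) := by
  rw [integral_mixture_sub_mixture_sq, integral_gaussPdf_sub_gaussPdf_sq μP1 μP2 hv hv, ← two_mul v,
    gaussPdf_self, gaussPdf_self, show 2 * π * (2 * v) = 4 * π * v by ring]
  ring
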